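/- The function ψ(x) = (1−x)·log(1−2x) + (1+x)·log(1+2x), defined on (−1/2, 1/2), is even (ψ(−x) = ψ(x)); moreover, ψ is monotonically decreasing on (0, 1/2) and satisfies ψ(x) < 0 for every x ∈ (0, 1/2). -/

import Mathlib

/-- The function `ψ(x) = (1−x)·log(1−2x) + (1+x)·log(1+2x)` on `(−1/2, 1/2)`. -/
noncomputable def psi (x : ℝ) : ℝ :=
  (1 - x) * Real.log (1 - 2 * x) + (1 + x) * Real.log (1 + 2 * x)

/-!
With `u = 1 + 2x` and `v = 1 - 2x`, one finds `ψ' = log u - log v - (1/v - 1/u)`. Since `u + v = 2`,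
the subtracted term is `(u/v - v/u)/2 = sinh (log (u/v))`, so `ψ' = t - sinh t` for
`t = log (u/v)`, which is negative as soon as `u > v`.
-/

lemma log_sub_log_lt_half_div_sub_div {a b : ℝ} (ha : 0 < a) (hab : a < b) :
    Real.log b - Real.log a < (b / a - a / b) / 2 := by
  have hb : 0 < b := ha.trans hab
  have hlog : 0 < Real.log (b / a) := Real.log_pos ((one_lt_div ha).2 hab)
  calc Real.log b - Real.log a = Real.log (b / a) := (Real.log_div hb.ne' ha.ne').symm
    _ < Real.sinh (Real.log (b / a)) := Real.self_lt_sinh_iff.2 hlog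
    _ = (b / a - a / b) / 2 := by rw [Real.sinh_log (div_pos hb ha), inv_div]

lemma psi_neg (x : ℝ) : psi (-x) = psi x := by
  simp only [psi, mul_neg, sub_neg_eq_add, ← sub_eq_add_neg]
  exact add_comm _ _

lemma psi_zero : psi 0 = 0 := by
  simp [psi]

lemma hasDerivAt_psi {x : ℝ} (hv : 1 - 2 * x ≠ 0) (hu : 1 + 2 * x ≠ 0) :
    HasDerivAt psi
      (Real.log (1 + 2 * x) - Real.log (1 - 2 * x)
        - ((1 + 2 * x) / (1 - 2 * x) - (1 - 2 * x) / (1 + 2 * x)) / 2) x := by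
  have hleft : HasDerivAt (fun y : ℝ ↦ (1 - y) * Real.log (1 - 2 * y)) _ x :=
    ((hasDerivAt_id' x).const_sub 1).mul ((((hasDerivAt_id' x).const_mul 2).const_sub 1).log hv)
  have hright : HasDerivAt (fun y : ℝ ↦ (1 + y) * Real.log (1 + 2 * y)) _ x :=
    ((hasDerivAt_id' x).const_add 1).mul ((((hasDerivAt_id' x).const_mul 2).const_add 1).log hu)
  refine (hleft.add hright).congr_deriv ?_
  field_simp
  ring

lemma deriv_psi_lt_zero {x : ℝ} (hx : x ∈ Set.Ioo (0 : ℝ) (1 / 2)) : deriv psi x < 0 := by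
  have hv : 0 < 1 - 2 * x := by linarith [hx.2]
  have huv : 1 - 2 * x < 1 + 2 * x := by linarith [hx.1]
  rw [(hasDerivAt_psi hv.ne' (hv.trans huv).ne').deriv]
  exact sub_neg.2 (log_sub_log_lt_half_div_sub_div hv huv)

lemma continuousOn_psi : ContinuousOn psi (Set.Ioo (-(1 / 2)) (1 / 2)) := by
  intro x hx
  have hv : 0 < 1 - 2 * x := by linarith [hx.2]
  have hu : 0 < 1 + 2 * x := by linarith [hx.1]
  exact (hasDerivAt_psi hv.ne' hu.ne').continuousAt.continuousWithinAt

lemma strictAntiOn_psi : StrictAntiOn psi (Set.Ico 0 (1 / 2)) := by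
  refine strictAntiOn_of_deriv_neg (convex_Ico 0 (1 / 2))
    (continuousOn_psi.mono (Set.Ico_subset_Ioo_left (by norm_num))) fun x hx ↦ ?_
  rw [interior_Ico] at hx
  exact deriv_psi_lt_zero hx

lemma psi_lt_zero {x : ℝ} (hx : x ∈ Set.Ioo (0 : ℝ) (1 / 2)) : psi x < 0 :=
  calc psi x < psi 0 :=
        strictAntiOn_psi (Set.left_mem_Ico.2 (by norm_num)) (Set.Ioo_subset_Ico_self hx) hx.1
    _ = 0 := psi_zero

/-- `ψ` is even on `(−1/2, 1/2)`, monotonically decreasing on `(0, 1/2)`,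
and negative on `(0, 1/2)`. -/
theorem stmt_13 :
    (∀ x ∈ Set.Ioo (-(1 / 2) : ℝ) (1 / 2), psi (-x) = psi x) ∧
    StrictAntiOn psi (Set.Ioo (0 : ℝ) (1 / 2)) ∧
    (∀ x ∈ Set.Ioo (0 : ℝ) (1 / 2), psi x < 0) := by
  exact ⟨fun x _ ↦ psi_neg x, strictAntiOn_psi.mono Set.Ioo_subset_Ico_self,
    fun _ hx ↦ psi_lt_zero hx⟩
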